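/- For every real x ≥ 3, the function f₁(x) := Σ_{r=1}^∞ x^{1-2r}/(2r(2r-1)) satisfies 0 < f₁(x) ≤ 0.6/x. -/

import Mathlib

theorem stmt_4 (x : ℝ) (hx : 3 ≤ x) :
    0 < (∑' n : ℕ,
        x ^ (1 - 2 * ((n : ℤ) + 1)) / ((2 * ((n : ℝ) + 1)) * (2 * ((n : ℝ) + 1) - 1))) ∧
    (∑' n : ℕ,
        x ^ (1 - 2 * ((n : ℤ) + 1)) / ((2 * ((n : ℝ) + 1)) * (2 * ((n : ℝ) + 1) - 1)))
      ≤ 0.6 / x := by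
  have hx0 : 0 < x := by linarith
  have hden : ∀ n : ℕ, (2 : ℝ) ≤ (2 * ((n : ℝ) + 1)) * (2 * ((n : ℝ) + 1) - 1) := by
    intro n
    have : (0 : ℝ) ≤ n := n.cast_nonneg
    nlinarith
  have hpos : ∀ n : ℕ, 0 < x ^ (1 - 2 * ((n : ℤ) + 1)) /
      ((2 * ((n : ℝ) + 1)) * (2 * ((n : ℝ) + 1) - 1)) := fun n =>
    div_pos (zpow_pos hx0 _) (by linarith [hden n])
  have hpow : ∀ n : ℕ, x ^ (1 - 2 * ((n : ℤ) + 1)) = x⁻¹ * ((x ^ 2)⁻¹) ^ n := by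
    intro n
    have : (1 - 2 * ((n : ℤ) + 1)) = -((1 + 2 * n : ℕ) : ℤ) := by push_cast; ring
    rw [this, zpow_neg, zpow_natCast, pow_add, pow_mul, mul_inv, pow_one, inv_pow]
  have hle : ∀ n : ℕ, x ^ (1 - 2 * ((n : ℤ) + 1)) /
      ((2 * ((n : ℝ) + 1)) * (2 * ((n : ℝ) + 1) - 1)) ≤ (x⁻¹ / 2) * (1 / 9 : ℝ) ^ n := by
    intro n
    have h9 : (x ^ 2)⁻¹ ≤ (1 / 9 : ℝ) := by
      rw [one_div]
      exact inv_anti₀ (by norm_num) (by nlinarith)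
    calc _ ≤ x ^ (1 - 2 * ((n : ℤ) + 1)) / 2 :=
          div_le_div_of_nonneg_left (zpow_pos hx0 _).le (by norm_num) (hden n)
      _ = (x⁻¹ / 2) * ((x ^ 2)⁻¹) ^ n := by rw [hpow]; ring
      _ ≤ _ := by gcongr
  have hg : HasSum (fun n : ℕ => (x⁻¹ / 2) * (1 / 9 : ℝ) ^ n) ((x⁻¹ / 2) * (1 - 1 / 9 : ℝ)⁻¹) :=
    (hasSum_geometric_of_lt_one (by norm_num) (by norm_num)).mul_left _
  have hs := Summable.of_nonneg_of_le (fun n => (hpos n).le) hle hg.summable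
  refine ⟨hs.tsum_pos (fun n => (hpos n).le) 0 (hpos 0), ?_⟩
  refine (hs.tsum_le_tsum hle hg.summable).trans ?_
  rw [hg.tsum_eq, div_eq_mul_inv (0.6 : ℝ) x]
  have : 0 < x⁻¹ := inv_pos.2 hx0
  norm_num
  linarith
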